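/- arXiv:0804.3682 — 2 statements merged into one kernel-verified Lean document; each statement's English description precedes it below -/
import Mathlib

section
/- Let m ≥ 3 be an odd integer, let a ∈ {0,1,…,m−1}, and let j ∈ {0,1}. Then for every ε > 0 one has T^{(j)}_{m,a}(x) − x/(2m) = Ω(x^{α(m)−ε}); that is, there exist a constant c > 0 and arbitrarily large x with |T^{(j)}_{m,a}(x) − x/(2m)| ≥ c·x^{α(m)−ε}, where α(m) = max_{1 ≤ l ≤ m−1} ( 1 + (1/(h·ln 2)) · Σ_{k=0}^{h−1} ln |sin(π l 2^k / m)| ) and h is the multiplicative order of 2 modulo m. (Lower-bound half of Theorem 1.) -/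
/-- `s n` is the number of 1's in the binary expansion of `n`. -/
def s (n : ℕ) : ℕ := (Nat.digits 2 n).sum

/-- `T m a j x` counts natural numbers `n < x` with `n ≡ a (mod m)` and `s n ≡ j (mod 2)`. -/
def T (m a j x : ℕ) : ℕ :=
  ((Finset.range x).filter (fun n => n % m = a ∧ s n % 2 = j)).card

/-!
Let `S_c(x)` be the sum of `(-1)^{s(n)}` over the `n < x` in the residue class `c` mod `m`, and
let `α_l` be the exponent belonging to the frequency `l`. Suppose that `T - x/(2m) = o(x^{α_l})`.
At odd `x` the left side is an odd multiple of `1/(2m)`, so `α_l > 0`, and then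
`S_a(x) = o(x^{α_l})`, because `(-1)^j S_a(x)` is `2(T - x/(2m))` up to `O(1)`.

Let `h` be the order of `2` mod `m` and `N = hk`. For `n < 2^N` we have
`s(2^N r + n) = s(r) + s(n)` and `2^N r + n ≡ r + n`, so the block `[2^N r, 2^N (r + 1))`
contributes `± S_{a-r}(2^N)` to `S_a`. Hence *every* residue class satisfies
`S_b(2^N) = o(2^{N α_l})`, and so does the character sum
`∑_b ζ^b S_b(2^N) = ∑_{n < 2^N} (-1)^{s(n)} ζ^n = ∏_{i < N} (1 - ζ^{2^i})`, `ζ = e^{2πil/m}`.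
But the factors of this product are `h`-periodic in `i` with modulus `2 |sin(π l 2^i / m)|`, so
the product has modulus exactly `2^{N α_l}`.
-/

section Preliminaries

open Finset Filter Asymptotics

lemma prod_range_mul_of_periodic {M : Type*} [CommMonoid M] {f : ℕ → M} {h : ℕ}
    (hf : Function.Periodic f h) (k : ℕ) :
    ∏ i ∈ range (h * k), f i = (∏ i ∈ range h, f i) ^ k := by
  induction k with
  | zero => simp
  | succ k ih =>
    rw [Nat.mul_succ, prod_range_add, ih, pow_succ]
    congr 1
    refine prod_congr rfl fun i _ => ?_
    rw [add_comm, mul_comm, ← smul_eq_mul, hf.nsmul k i]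

lemma abs_count_modEq_sub_div_le_one {m : ℕ} (hm : 0 < m) (a x : ℕ) :
    |(Nat.count (· ≡ a [MOD m]) x : ℝ) - x / m| ≤ 1 := by
  have hle := Nat.floor_le (by positivity : (0 : ℝ) ≤ x / m)
  have hlt := Nat.lt_floor_add_one ((x : ℝ) / m)
  rw [Nat.count_modEq_card x hm, ← Nat.floor_div_eq_div (K := ℝ), abs_le]
  split_ifs <;> push_cast <;> constructor <;> linarith

lemma one_div_two_mul_le_abs_sub_div {m x : ℕ} (hm : 0 < m) (hx : Odd x) (t : ℤ) :
    1 / (2 * m : ℝ) ≤ |(t : ℝ) - x / (2 * m)| := by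
  have hne : 2 * m * t - x ≠ 0 := by
    obtain ⟨y, rfl⟩ := hx
    rw [mul_assoc]
    push_cast
    omega
  have hone : (1 : ℝ) ≤ |2 * m * (t : ℝ) - x| := mod_cast Int.one_le_abs hne
  have hscale : (t : ℝ) - x / (2 * m) = (2 * m * t - x) / (2 * m) := by field_simp
  rw [hscale, abs_div, abs_of_pos (by positivity : (0 : ℝ) < 2 * m)]
  gcongr

lemma isBigO_natCast_rpow_rpow {α β : ℝ} (h : β ≤ α) :
    (fun x : ℕ => (x : ℝ) ^ β) =O[atTop] fun x : ℕ => (x : ℝ) ^ α := by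
  refine .of_norm_eventuallyLE ?_
  filter_upwards [eventually_ge_atTop 1] with x hx
  rw [Real.norm_of_nonneg (by positivity)]
  exact Real.rpow_le_rpow_of_exponent_le (mod_cast hx) h

lemma isLittleO_rpow_comp_mul_const {f : ℕ → ℝ} {α : ℝ}
    (hf : f =o[atTop] fun x : ℕ => (x : ℝ) ^ α) {u : ℕ → ℕ} (hu : Tendsto u atTop atTop)
    {q : ℕ} (hq : 0 < q) :
    (fun k => f (u k * q)) =o[atTop] fun k => (u k : ℝ) ^ α := by
  refine (hf.comp_tendsto (hu.atTop_mul_const' hq)).trans_isBigO ?_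
  simp only [Function.comp_def, Nat.cast_mul, Real.mul_rpow (Nat.cast_nonneg _) (Nat.cast_nonneg q)]
  simp only [mul_comm _ ((q : ℝ) ^ α)]
  exact isBigO_const_mul_self _ _ _

lemma exists_mul_rpow_le_abs_of_not_isLittleO {f : ℕ → ℝ} {α β : ℝ} (h : β ≤ α)
    (hf : ¬ f =o[atTop] fun x : ℕ => (x : ℝ) ^ α) :
    ∃ c : ℝ, 0 < c ∧ ∀ X : ℕ, ∃ x : ℕ, X ≤ x ∧ c * (x : ℝ) ^ β ≤ |f x| := by
  have hβ : ¬ f =o[atTop] fun x : ℕ => (x : ℝ) ^ β :=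
    fun hlo => hf (hlo.trans_isBigO (isBigO_natCast_rpow_rpow h))
  rw [isLittleO_iff] at hβ
  push Not at hβ
  obtain ⟨c, hc, hfreq⟩ := hβ
  refine ⟨c, hc, frequently_atTop.mp (hfreq.mono fun x hx => ?_)⟩
  rw [Real.norm_of_nonneg (by positivity)] at hx
  exact hx.le

end Preliminaries

section DigitSum

open Finset

lemma s_two_pow_mul_add {N n : ℕ} (hn : n < 2 ^ N) (r : ℕ) :
    s (2 ^ N * r + n) = s r + s n := by
  rcases r.eq_zero_or_pos with rfl | hr
  · simp [s]
  · have hlen : (Nat.digits 2 n).length ≤ N := (Nat.digits_length_le_iff one_lt_two n).mpr hn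
    have happend := Nat.digits_append_zeroes_append_digits (k := N - (Nat.digits 2 n).length)
      (n := n) one_lt_two hr
    rw [Nat.add_sub_cancel' hlen] at happend
    rw [s, add_comm (2 ^ N * r), ← happend]
    simp [s, add_comm]

lemma sum_neg_one_pow_s_mul_pow {R : Type*} [CommRing R] (ζ : R) (N : ℕ) :
    ∑ n ∈ range (2 ^ N), (-1) ^ s n * ζ ^ n = ∏ i ∈ range N, (1 - ζ ^ 2 ^ i) := by
  induction N with
  | zero => simp [s]
  | succ N ih =>
    have hshift : ∀ n ∈ range (2 ^ N),
        (-1) ^ s (2 ^ N + n) * ζ ^ (2 ^ N + n) = -((-1) ^ s n * ζ ^ n) * ζ ^ 2 ^ N := by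
      intro n hn
      have hs : s (2 ^ N + n) = 1 + s n := by
        simpa [s] using s_two_pow_mul_add (mem_range.mp hn) 1
      rw [hs, pow_add, pow_add]
      ring
    rw [pow_succ, mul_two, sum_range_add, sum_congr rfl hshift, ← sum_mul, sum_neg_distrib, ih,
      prod_range_succ]
    ring

end DigitSum

section SignedCount

open Finset Filter Asymptotics

/-- The signed count `S_c(x)` of a residue class `c` mod `m`: the sum of the Thue–Morse signs
`(-1)^{s(n)}` over the `n < x` in that class. -/
def signedCount (m : ℕ) (c : ZMod m) (x : ℕ) : ℝ :=
  ∑ n ∈ range x with ((n : ℕ) : ZMod m) = c, (-1) ^ s n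

variable {m : ℕ}

lemma sum_mul_signedCount [NeZero m] (g : ZMod m → ℂ) (x : ℕ) :
    ∑ c, g c * signedCount m c x = ∑ n ∈ range x, (-1) ^ s n * g n := by
  simp only [signedCount, sum_filter, Complex.ofReal_sum, mul_sum]
  rw [sum_comm]
  simp [apply_ite Complex.ofReal, mul_comm]

lemma signedCount_block {N : ℕ} (hN : (2 : ZMod m) ^ N = 1) (c : ZMod m) (r : ℕ) :
    signedCount m c (2 ^ N * (r + 1)) - signedCount m c (2 ^ N * r)
      = (-1) ^ s r * signedCount m (c - r) (2 ^ N) := by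
  have hmem (n : ℕ) : ((2 ^ N * r + n : ℕ) : ZMod m) = c ↔ (n : ZMod m) = c - r := by
    simp [hN, eq_sub_iff_add_eq']
  simp only [signedCount, sum_filter, mul_add_one, sum_range_add, add_sub_cancel_left, hmem,
    mul_sum]
  refine sum_congr rfl fun n hn => ?_
  rw [s_two_pow_mul_add (mem_range.mp hn), pow_add, mul_ite, mul_zero]

lemma two_mul_T {a j : ℕ} (ha : a < m) (hj : j < 2) (x : ℕ) :
    2 * (T m a j x : ℝ) = Nat.count (· ≡ a [MOD m]) x + (-1) ^ j * signedCount m a x := by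
  have hparity (k : ℕ) : 2 * (if k % 2 = j then 1 else 0 : ℝ) = 1 + (-1) ^ j * (-1) ^ k := by
    rw [← Nat.mod_add_div k 2, pow_add, pow_mul]
    rcases Nat.mod_two_eq_zero_or_one k with hk | hk <;> interval_cases j <;> norm_num [hk]
  have hclass (n : ℕ) : n % m = a ↔ (n : ZMod m) = a := by
    rw [ZMod.natCast_eq_natCast_iff', Nat.mod_eq_of_lt ha]
  simp only [T, signedCount, Nat.count_eq_card_filter_range, natCast_card_filter, sum_filter,
    mul_sum, ← sum_add_distrib, ← ZMod.natCast_eq_natCast_iff, hclass]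
  refine sum_congr rfl fun n _ => ?_
  by_cases hn : (n : ZMod m) = a
  · simpa only [hn, true_and, if_true] using hparity (s n)
  · simp only [hn, false_and, if_false, mul_zero, add_zero]

lemma abs_signedCount_le {a j : ℕ} (ha : a < m) (hj : j < 2) (x : ℕ) :
    |signedCount m a x| ≤ 2 * |(T m a j x : ℝ) - x / (2 * m)| + 1 := by
  have hsign : |signedCount m a x| = |(-1) ^ j * signedCount m a x| := by simp [abs_mul]
  have hsplit : (-1) ^ j * signedCount m a x = 2 * ((T m a j x : ℝ) - x / (2 * m))
      - (Nat.count (· ≡ a [MOD m]) x - x / m) := by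
    have hhalf : 2 * ((x : ℝ) / (2 * m)) = x / m := by field_simp
    rw [mul_sub, two_mul_T ha hj, hhalf]
    ring
  calc |signedCount m a x|
      ≤ |2 * ((T m a j x : ℝ) - x / (2 * m))| + |(Nat.count (· ≡ a [MOD m]) x : ℝ) - x / m| := by
        rw [hsign, hsplit]
        exact abs_sub _ _
    _ ≤ 2 * |(T m a j x : ℝ) - x / (2 * m)| + 1 := by
        rw [abs_mul, abs_two]
        gcongr
        exact abs_count_modEq_sub_div_le_one (a.zero_le.trans_lt ha) a x

lemma isLittleO_signedCount_of_isLittleO_T {a j : ℕ} (ha : a < m) (hj : j < 2) {α : ℝ}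
    (hα : 0 < α)
    (hT : (fun x : ℕ => (T m a j x : ℝ) - x / (2 * m)) =o[atTop] fun x : ℕ => (x : ℝ) ^ α) :
    signedCount m a =o[atTop] fun x : ℕ => (x : ℝ) ^ α := by
  have hone : (fun _ : ℕ => (1 : ℝ)) =o[atTop] fun x : ℕ => (x : ℝ) ^ α :=
    isLittleO_const_left.mpr <| .inr <| tendsto_norm_atTop_atTop.comp <|
      (tendsto_rpow_atTop hα).comp tendsto_natCast_atTop_atTop
  refine IsBigO.trans_isLittleO (.of_norm_le fun x => ?_) ((hT.norm_left.const_mul_left 2).add hone)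
  exact abs_signedCount_le ha hj x

lemma isLittleO_signedCount_two_pow [NeZero m] {c : ZMod m} {α : ℝ}
    (hc : signedCount m c =o[atTop] fun x : ℕ => (x : ℝ) ^ α) {h : ℕ} (hh : 0 < h)
    (h2 : (2 : ZMod m) ^ h = 1) (b : ZMod m) :
    (fun k : ℕ => signedCount m b (2 ^ (h * k))) =o[atTop]
      fun k : ℕ => ((2 ^ (h * k) : ℕ) : ℝ) ^ α := by
  -- The summand `m` makes `r` positive, so that the left end of the block tends to infinity too.
  set r : ℕ := (c - b).val + m with hr
  have hcr : c - r = b := by simp [hr]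
  have hu : Tendsto (fun k : ℕ => 2 ^ (h * k)) atTop atTop :=
    (tendsto_pow_atTop_atTop_of_one_lt one_lt_two).comp (tendsto_id.const_mul_atTop' hh)
  have hends := (isLittleO_rpow_comp_mul_const hc hu r.succ_pos).sub
    (isLittleO_rpow_comp_mul_const hc hu (Nat.add_pos_right _ (NeZero.pos m) : 0 < r))
  refine isLittleO_norm_left.mp (hends.norm_left.congr_left fun k => ?_)
  rw [signedCount_block (by rw [pow_mul, h2, one_pow]), hcr, norm_mul, norm_pow, norm_neg, norm_one,
    one_pow, one_mul]

end SignedCount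

section CharacterSum

open Finset Filter Asymptotics

/-- The exponent `α_l` attached to the frequency `l` mod `m`, normalised so that for odd `m ∤ l` the
product of the `|1 - e^{2πil2^k/m}|` over one period `k < h` is `2 ^ (h α_l)`, where `h` is the
order of `2` mod `m`. -/
noncomputable def gelfondExponent (m l : ℕ) : ℝ :=
  1 + (1 / (orderOf (2 : ZMod m) * Real.log 2)) *
    ∑ k ∈ range (orderOf (2 : ZMod m)), Real.log |Real.sin (Real.pi * l * 2 ^ k / m)|

variable {m : ℕ}

lemma isUnit_two_of_odd (hodd : Odd m) : IsUnit (2 : ZMod m) :=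
  mod_cast (ZMod.isUnit_iff_coprime 2 m).mpr (Nat.coprime_two_left.mpr hodd)

lemma orderOf_two_pos (hodd : Odd m) : 0 < orderOf (2 : ZMod m) := by
  have : NeZero m := ⟨hodd.pos.ne'⟩
  obtain ⟨u, hu⟩ := isUnit_two_of_odd hodd
  rw [← hu, orderOf_units]
  exact orderOf_pos u

lemma addChar_apply_pow {R M : Type*} [Semiring R] [Monoid M] (ψ : AddChar R M) (c : R) (n : ℕ) :
    ψ c ^ n = ψ (n * c) := by
  rw [← AddChar.map_nsmul_eq_pow, nsmul_eq_mul]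

lemma norm_one_sub_stdAddChar [NeZero m] (n : ℕ) :
    ‖1 - ZMod.stdAddChar (n : ZMod m)‖ = 2 * |Real.sin (Real.pi * n / m)| := by
  have hexp : ZMod.stdAddChar (n : ZMod m)
      = Complex.exp (Complex.I * ((2 * (Real.pi * n / m) : ℝ) : ℂ)) := by
    rw [← Int.cast_natCast, ZMod.stdAddChar_coe]
    congr 1
    push_cast
    ring
  rw [hexp, norm_sub_rev, Complex.norm_exp_I_mul_ofReal_sub_one, norm_mul, Real.norm_two,
    mul_div_cancel_left₀ _ two_ne_zero, Real.norm_eq_abs]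

lemma stdAddChar_pow_two_pow_ne_one [NeZero m] (hodd : Odd m) {l : ℕ} (hl : ¬ m ∣ l) (i : ℕ) :
    (ZMod.stdAddChar (l : ZMod m)) ^ 2 ^ i ≠ 1 := by
  rw [addChar_apply_pow, ← AddChar.map_zero_eq_one (ZMod.stdAddChar (N := m)),
    ZMod.injective_stdAddChar.ne_iff, ← Nat.cast_mul, Ne, ZMod.natCast_eq_zero_iff]
  exact fun hdvd => hl (((Nat.coprime_two_right.mpr hodd).pow_right i).dvd_of_dvd_mul_left hdvd)

lemma norm_prod_one_sub_stdAddChar_pow [NeZero m] (hodd : Odd m) {l : ℕ} (hl : ¬ m ∣ l) :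
    ‖∏ i ∈ range (orderOf (2 : ZMod m)), (1 - (ZMod.stdAddChar (l : ZMod m)) ^ 2 ^ i)‖
      = 2 ^ (orderOf (2 : ZMod m) * gelfondExponent m l) := by
  set h := orderOf (2 : ZMod m) with hh
  have hfactor (i : ℕ) : ‖1 - (ZMod.stdAddChar (l : ZMod m)) ^ 2 ^ i‖
      = 2 * |Real.sin (Real.pi * l * 2 ^ i / m)| := by
    rw [addChar_apply_pow, ← Nat.cast_mul, norm_one_sub_stdAddChar]
    push_cast
    ring_nf
  have hpos (i : ℕ) : 0 < |Real.sin (Real.pi * l * 2 ^ i / m)| := by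
    have := norm_pos_iff.mpr (sub_ne_zero.mpr (stdAddChar_pow_two_pow_ne_one hodd hl i).symm)
    rwa [hfactor, mul_pos_iff_of_pos_left two_pos] at this
  have hlog : h * gelfondExponent m l * Real.log 2
      = ∑ i ∈ range h, (Real.log 2 + Real.log |Real.sin (Real.pi * l * 2 ^ i / m)|) := by
    have : (h : ℝ) ≠ 0 := mod_cast (orderOf_two_pos hodd).ne'
    have : Real.log 2 ≠ 0 := (Real.log_pos one_lt_two).ne'
    rw [sum_add_distrib, sum_const, card_range, nsmul_eq_mul, gelfondExponent, ← hh]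
    field_simp
  rw [norm_prod, Real.rpow_def_of_pos two_pos, mul_comm, hlog, Real.exp_sum]
  refine prod_congr rfl fun i _ => ?_
  rw [hfactor, Real.exp_add, Real.exp_log two_pos, Real.exp_log (hpos i)]

lemma norm_sum_two_pow_stdAddChar [NeZero m] (hodd : Odd m) {l : ℕ} (hl : ¬ m ∣ l) (k : ℕ) :
    ‖∑ n ∈ range (2 ^ (orderOf (2 : ZMod m) * k)),
        (-1) ^ s n * (ZMod.stdAddChar (l : ZMod m)) ^ n‖
      = ((2 ^ (orderOf (2 : ZMod m) * k) : ℕ) : ℝ) ^ gelfondExponent m l := by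
  have hperiodic : Function.Periodic
      (fun i : ℕ => 1 - (ZMod.stdAddChar (l : ZMod m)) ^ 2 ^ i) (orderOf (2 : ZMod m)) := by
    intro i
    simp only [addChar_apply_pow, pow_add, Nat.cast_mul, Nat.cast_pow, Nat.cast_ofNat,
      pow_orderOf_eq_one, mul_one]
  rw [sum_neg_one_pow_s_mul_pow, prod_range_mul_of_periodic hperiodic, norm_pow,
    norm_prod_one_sub_stdAddChar_pow hodd hl, Nat.cast_pow, Nat.cast_ofNat, pow_mul,
    Real.rpow_mul two_pos.le, Real.rpow_natCast, Real.rpow_pow_comm (by positivity)]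

lemma not_isLittleO_signedCount (hodd : Odd m) {l : ℕ} (hl : ¬ m ∣ l) (c : ZMod m) :
    ¬ signedCount m c =o[atTop] fun x : ℕ => (x : ℝ) ^ gelfondExponent m l := by
  intro hc
  have : NeZero m := ⟨hodd.pos.ne'⟩
  set h := orderOf (2 : ZMod m)
  have hclass := isLittleO_signedCount_two_pow hc (orderOf_two_pos hodd) (pow_orderOf_eq_one _)
  have hsum : (fun k : ℕ => ∑ n ∈ range (2 ^ (h * k)),
      (-1) ^ s n * (ZMod.stdAddChar (l : ZMod m)) ^ n)
        =o[atTop] fun k : ℕ => ((2 ^ (h * k) : ℕ) : ℝ) ^ gelfondExponent m l := by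
    simp only [addChar_apply_pow,
      ← sum_mul_signedCount fun b : ZMod m => ZMod.stdAddChar (b * (l : ZMod m))]
    exact .fun_sum fun b _ => (Complex.isLittleO_ofReal_left.mpr (hclass b)).const_mul_left _
  refine isLittleO_irrefl ?_ (hsum.norm_left.congr_left (norm_sum_two_pow_stdAddChar hodd hl))
  exact .of_forall fun k => by positivity

end CharacterSum

section Omega

open Filter Asymptotics

lemma not_isLittleO_T_one {m : ℕ} (hm : 0 < m) (a j : ℕ) :
    ¬ (fun x : ℕ => (T m a j x : ℝ) - x / (2 * m)) =o[atTop] fun _ => (1 : ℝ) := by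
  intro hT
  have hsmall := hT.def (by positivity : (0 : ℝ) < 1 / (4 * m))
  obtain ⟨x, hx, hodd⟩ := (hsmall.and_frequently Nat.frequently_odd).exists
  have hlarge := one_div_two_mul_le_abs_sub_div hm hodd (T m a j x)
  have hquarter : (1 : ℝ) / (4 * m) < 1 / (2 * m) := by gcongr; norm_num
  rw [norm_one, mul_one, Real.norm_eq_abs] at hx
  exact absurd (hlarge.trans hx) hquarter.not_ge

/-- `Ω` is meant in the sense of Hardy and Littlewood: the negation of `o`. -/
theorem gelfond_exact_exponent_lower_general {m : ℕ} (hodd : Odd m) {a : ℕ} (ha : a < m)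
    {j : ℕ} (hj : j < 2) {l : ℕ} (hl : ¬ m ∣ l) :
    ¬ (fun x : ℕ => (T m a j x : ℝ) - x / (2 * m))
      =o[atTop] fun x : ℕ => (x : ℝ) ^ gelfondExponent m l := by
  intro hT
  have hpos : 0 < gelfondExponent m l := by
    by_contra! hnonpos
    refine not_isLittleO_T_one hodd.pos a j (hT.trans_isBigO ?_)
    simpa only [Real.rpow_zero] using isBigO_natCast_rpow_rpow hnonpos
  exact not_isLittleO_signedCount hodd hl a (isLittleO_signedCount_of_isLittleO_T ha hj hpos hT)

end Omega

/-- Lower-bound half of Theorem 1: for odd `m ≥ 3`,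
`T_{m,a}^{(j)}(x) - x/(2m) = Ω(x^{α-ε})` for every `ε > 0`: there is `c > 0` and
arbitrarily large `x` with `|T_{m,a}^{(j)}(x) - x/(2m)| ≥ c x^{α-ε}`, where
`α = max_{1 ≤ l ≤ m-1} (1 + (1/(h ln 2)) Σ_{k<h} ln |sin (π l 2^k / m)|)` and
`h` is the multiplicative order of `2` mod `m`. -/
theorem gelfond_exact_exponent_lower
    (m : ℕ) (hm : 3 ≤ m) (hodd : Odd m)
    (a : ℕ) (ha : a < m) (j : ℕ) (hj : j < 2)
    (h : ℕ) (hh : h = orderOf (2 : ZMod m))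
    (α : ℝ)
    (hα : IsGreatest { y : ℝ | ∃ l ∈ Finset.Icc 1 (m - 1),
      y = 1 + (1 / (h * Real.log 2)) *
        ∑ k ∈ Finset.range h, Real.log |Real.sin (Real.pi * l * 2 ^ k / m)| } α)
    (ε : ℝ) (hε : 0 < ε) :
    ∃ c : ℝ, 0 < c ∧ ∀ X : ℕ, ∃ x : ℕ, X ≤ x ∧
      c * (x : ℝ) ^ (α - ε) ≤ |(T m a j x : ℝ) - x / (2 * m)| := by
  subst hh
  obtain ⟨⟨l, hl, rfl⟩, -⟩ := hα
  rw [Finset.mem_Icc] at hl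
  have hml : ¬ m ∣ l := Nat.not_dvd_of_pos_of_lt hl.1 (by omega)
  exact exists_mul_rpow_le_abs_of_not_isLittleO (sub_le_self _ hε.le)
    (gelfond_exact_exponent_lower_general hodd ha hj hml)
end

section
/- Let p be an odd prime for which 2 is a primitive root modulo p (i.e., 2 has multiplicative order p−1 modulo p), let a ∈ {0,1,…,p−1} and j ∈ {0,1}. Then for every ε > 0 one has T^{(j)}_{p,a}(x) = x/(2p) + O(x^{α+ε}) as x → ∞, where α = ln p / ((p−1)·ln 2). (Upper-bound half of Theorem 2.) -/
open Asymptotics Filter Finset Polynomial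
open scoped Nat

lemma s_two_mul (n : ℕ) : s (2 * n) = s n := by
  rcases eq_or_ne n 0 with rfl | hn
  · rfl
  · simpa [s] using congrArg List.sum (Nat.digits_add 2 one_lt_two 0 n two_pos (.inr hn))

lemma s_two_mul_add_one (n : ℕ) : s (2 * n + 1) = s n + 1 := by
  simpa [s, add_comm] using
    congrArg List.sum (Nat.digits_add 2 one_lt_two 1 n one_lt_two (.inl one_ne_zero))

/-- The exponential sum `∑ n < x, (-1) ^ s n * z ^ n` of the Thue–Morse sequence, with the character
`n ↦ z ^ n` encoded by its value `z` at `1`. -/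
def thueMorseSum {R : Type*} [Ring R] (z : R) (x : ℕ) : R :=
  ∑ n ∈ range x, (-1) ^ s n * z ^ n

section FunctionalEquation

variable {R : Type*} [CommRing R]

lemma thueMorseSum_two_mul (z : R) (x : ℕ) :
    thueMorseSum z (2 * x) = (1 - z) * thueMorseSum (z ^ 2) x := by
  unfold thueMorseSum
  induction x with
  | zero => simp
  | succ x ih =>
    rw [Nat.mul_succ, sum_range_succ, sum_range_succ, ih, sum_range_succ, s_two_mul,
      s_two_mul_add_one]
    ring

lemma thueMorseSum_two_pow_mul (z : R) (k x : ℕ) :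
    thueMorseSum z (2 ^ k * x) =
      (∏ i ∈ range k, (1 - z ^ 2 ^ i)) * thueMorseSum (z ^ 2 ^ k) x := by
  induction k generalizing x with
  | zero => simp
  | succ k ih =>
    rw [pow_succ, mul_assoc, ih, thueMorseSum_two_mul, prod_range_succ, ← pow_mul, mul_assoc]

end FunctionalEquation

lemma norm_thueMorseSum_add_sub_le {R : Type*} [NormedRing R] [NormOneClass R] {z : R}
    (hz : ‖z‖ ≤ 1) (x r : ℕ) :
    ‖thueMorseSum z (x + r) - thueMorseSum z x‖ ≤ r := by
  have norm_term_le (n : ℕ) : ‖(-1) ^ s n * z ^ n‖ ≤ 1 := by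
    rcases neg_one_pow_eq_or R (s n) with h | h <;>
      simpa [h] using (norm_pow_le z n).trans (pow_le_one₀ (norm_nonneg z) hz)
  unfold thueMorseSum
  rw [sum_range_add, add_sub_cancel_left]
  simpa using norm_sum_le_of_le (range r) fun i _ => norm_term_le (x + i)

lemma isBigO_natCast_rpow_rpow_of_le {α β : ℝ} (h : α ≤ β) :
    (fun n : ℕ => (n : ℝ) ^ α) =O[atTop] fun n : ℕ => (n : ℝ) ^ β := by
  refine .of_bound' ((eventually_ge_atTop 1).mono fun n hn => ?_)
  rw [Real.norm_of_nonneg (by positivity), Real.norm_of_nonneg (by positivity)]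
  exact Real.rpow_le_rpow_of_exponent_le (by exact_mod_cast hn) h

lemma pow_log_le_rpow_logb {b n : ℕ} {C : ℝ} (hb : 1 < b) (hC : 1 ≤ C) (hn : n ≠ 0) :
    C ^ Nat.log b n ≤ (n : ℝ) ^ Real.logb b C := by
  have hb' : (1 : ℝ) < b := by exact_mod_cast hb
  calc C ^ Nat.log b n = ((b : ℝ) ^ Real.logb b C) ^ Nat.log b n := by
        rw [Real.rpow_logb (by positivity) hb'.ne' (by positivity)]
    _ = ((b ^ Nat.log b n : ℕ) : ℝ) ^ Real.logb b C := by
        rw [Nat.cast_pow, ← Real.rpow_natCast, ← Real.rpow_natCast, ← Real.rpow_mul (by positivity),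
          ← Real.rpow_mul (by positivity), mul_comm]
    _ ≤ (n : ℝ) ^ Real.logb b C := by
        have := Real.logb_nonneg hb' hC
        gcongr
        exact Nat.pow_log_le_self b hn

lemma le_pow_mul_of_le_mul_div {g : ℕ → ℝ} {b : ℕ} {C : ℝ} (hC : 0 ≤ C)
    (hg : ∀ n, g n ≤ C * g (n / b)) (n k : ℕ) : g n ≤ C ^ k * g (n / b ^ k) := by
  induction k with
  | zero => simp
  | succ k ih =>
    calc g n ≤ C ^ k * g (n / b ^ k) := ih
      _ ≤ C ^ k * (C * g (n / b ^ k / b)) := by gcongr; exact hg _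
      _ = C ^ (k + 1) * g (n / b ^ (k + 1)) := by
        rw [Nat.div_div_eq_div_mul, ← mul_assoc, ← pow_succ, ← pow_succ]

lemma le_mul_rpow_logb_of_le_mul_div {g : ℕ → ℝ} {b n : ℕ} {C : ℝ} (hb : 1 < b) (hC : 1 < C)
    (hg : ∀ n, g n ≤ C * g (n / b)) (hn : n ≠ 0) :
    g n ≤ C * g 0 * (n : ℝ) ^ Real.logb b C := by
  have g_zero_nonneg : 0 ≤ g 0 := by
    have := hg 0
    rw [Nat.zero_div] at this
    nlinarith
  calc g n ≤ C ^ (Nat.log b n + 1) * g (n / b ^ (Nat.log b n + 1)) :=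
        le_pow_mul_of_le_mul_div (by positivity) hg n _
    _ = C * g 0 * C ^ Nat.log b n := by
        rw [Nat.div_eq_of_lt (Nat.lt_pow_succ_log_self hb n)]
        ring
    _ ≤ C * g 0 * (n : ℝ) ^ Real.logb b C := by
        gcongr
        exact pow_log_le_rpow_logb hb hC.le hn

theorem isBigO_rpow_logb_of_norm_le_mul_norm_div_add {E : Type*} [Norm E]
    {f : ℕ → E} {b : ℕ} {C D : ℝ} (hb : 1 < b) (hC : 1 < C)
    (hf : ∀ n, ‖f n‖ ≤ C * ‖f (n / b)‖ + D) :
    f =O[atTop] fun n : ℕ => (n : ℝ) ^ Real.logb b C := by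
  -- The error `D` is absorbed by a constant shift, the fixed point of `t ↦ C * t - D`.
  set shift := D / (C - 1)
  have hshift : C * shift = shift + D := by
    linear_combination div_mul_cancel₀ D (sub_pos.2 hC).ne'
  have shifted_rec (n : ℕ) : ‖f n‖ + shift ≤ C * (‖f (n / b)‖ + shift) := by
    linarith [hf n]
  refine IsBigO.of_bound (C * (‖f 0‖ + shift) + |shift|) ?_
  filter_upwards [eventually_ge_atTop 1] with n hn
  have shifted_le := le_mul_rpow_logb_of_le_mul_div hb hC shifted_rec (Nat.one_le_iff_ne_zero.1 hn)
  have abs_shift_le : |shift| ≤ |shift| * (n : ℝ) ^ Real.logb b C :=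
    le_mul_of_one_le_right (abs_nonneg _) <|
      Real.one_le_rpow (by exact_mod_cast hn) (Real.logb_nonneg (by exact_mod_cast hb) hC.le)
  rw [Real.norm_of_nonneg (by positivity), add_mul]
  linarith [neg_le_abs shift]

theorem isBigO_thueMorseSum_of_norm_prod_le {K : Type*} [NormedField K] {z : K} {k : ℕ} {C : ℝ}
    (hk : k ≠ 0) (hz : z ^ 2 ^ k = z) (hC : 1 < C)
    (hprod : ‖∏ i ∈ range k, (1 - z ^ 2 ^ i)‖ ≤ C) :
    thueMorseSum z =O[atTop] fun x : ℕ => (x : ℝ) ^ Real.logb (2 ^ k) C := by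
  have one_lt_base : 1 < 2 ^ k := Nat.one_lt_two_pow hk
  have norm_z_le : ‖z‖ ≤ 1 := by
    by_contra! h
    exact (lt_self_pow₀ h one_lt_base).ne' (by rw [← norm_pow, hz])
  have norm_rec (x : ℕ) :
      ‖thueMorseSum z x‖ ≤ C * ‖thueMorseSum z (x / 2 ^ k)‖ + 2 ^ k := by
    have hx : 2 ^ k * (x / 2 ^ k) + x % 2 ^ k = x := Nat.div_add_mod x (2 ^ k)
    have hmod : ((x % 2 ^ k : ℕ) : ℝ) ≤ 2 ^ k := by
      exact_mod_cast (Nat.mod_lt x (by positivity)).le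
    calc ‖thueMorseSum z x‖
        ≤ ‖thueMorseSum z (2 ^ k * (x / 2 ^ k))‖
            + ‖thueMorseSum z x - thueMorseSum z (2 ^ k * (x / 2 ^ k))‖ :=
          norm_le_norm_add_norm_sub' _ _
      _ ≤ C * ‖thueMorseSum z (x / 2 ^ k)‖ + 2 ^ k := by
          gcongr ?_ + ?_
          · rw [thueMorseSum_two_pow_mul, hz, norm_mul]
            gcongr
          · have := norm_thueMorseSum_add_sub_le norm_z_le (2 ^ k * (x / 2 ^ k)) (x % 2 ^ k)
            rw [hx] at this
            exact this.trans hmod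
  simpa using isBigO_rpow_logb_of_norm_le_mul_norm_div_add one_lt_base hC norm_rec

section PrimitiveRoot

variable {R : Type*} [CommRing R] [IsDomain R] {z : R}

lemma image_pow_pow_eq_primitiveRoots [DecidableEq R] {n g : ℕ} [NeZero n]
    (hz : IsPrimitiveRoot z n) (hg : orderOf (g : ZMod n) = φ n) :
    (range (φ n)).image (fun i => z ^ g ^ i) = primitiveRoots n R := by
  have hn : 0 < n := NeZero.pos n
  have coprime_g : g.Coprime n := by
    rw [← ZMod.isUnit_iff_coprime]
    exact (orderOf_pos_iff.1 (hg ▸ Nat.totient_pos.2 hn)).isUnit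
  have injOn_pow_pow : Set.InjOn (fun i => z ^ g ^ i) (range (φ n)) := by
    intro i hi k hk h
    have hmod : g ^ i ≡ g ^ k [MOD n] := by
      rwa [hz.eq_orderOf, ← (hz.isOfFinOrder hn.ne').pow_eq_pow_iff_modEq]
    refine pow_injOn_Iio_orderOf (x := (g : ZMod n)) (by simpa [hg] using hi)
      (by simpa [hg] using hk) ?_
    exact_mod_cast (ZMod.natCast_eq_natCast_iff _ _ _).2 hmod
  refine eq_of_subset_of_card_le (image_subset_iff.2 fun i _ => ?_) ?_
  · exact (mem_primitiveRoots hn).2 (hz.pow_of_coprime _ (coprime_g.pow_left i))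
  · rw [card_image_of_injOn injOn_pow_pow, hz.card_primitiveRoots, card_range]

lemma prod_one_sub_pow_pow_eq_eval_cyclotomic {n g : ℕ} [NeZero n] (hz : IsPrimitiveRoot z n)
    (hg : orderOf (g : ZMod n) = φ n) :
    ∏ i ∈ range (φ n), (1 - z ^ g ^ i) = (cyclotomic n R).eval 1 := by
  classical
  have himage := image_pow_pow_eq_primitiveRoots hz hg
  have hinj : Set.InjOn (fun i => z ^ g ^ i) (range (φ n)) := by
    rw [← card_image_iff, himage, hz.card_primitiveRoots, card_range]
  rw [cyclotomic_eq_prod_X_sub_primitiveRoots hz, ← himage, prod_image hinj, eval_prod]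
  simp

lemma prod_one_sub_pow_two_pow_eq_ite [DecidableEq R] {p : ℕ} (hp : p.Prime)
    (hprim : orderOf (2 : ZMod p) = p - 1) (hz : z ^ p = 1) :
    ∏ i ∈ range (p - 1), (1 - z ^ 2 ^ i) = if z = 1 then 0 else (p : R) := by
  have := Fact.mk hp
  split_ifs with h
  · exact prod_eq_zero (mem_range.2 (Nat.sub_pos_of_lt hp.one_lt)) (by simp [h])
  · have hz' : IsPrimitiveRoot z p := orderOf_eq_prime hz h ▸ IsPrimitiveRoot.orderOf z
    rw [← Nat.totient_prime hp] at hprim ⊢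
    rw [prod_one_sub_pow_pow_eq_eval_cyclotomic hz' (mod_cast hprim), eval_one_cyclotomic_prime]

end PrimitiveRoot

lemma isBigO_thueMorseSum_of_pow_prime_eq_one {K : Type*} [NormedField K] {p : ℕ} (hp : p.Prime)
    (hprim : orderOf (2 : ZMod p) = p - 1) {z : K} (hz : z ^ p = 1) :
    thueMorseSum z =O[atTop] fun x : ℕ => (x : ℝ) ^ Real.logb (2 ^ (p - 1)) p := by
  have period : z ^ 2 ^ (p - 1) = z := by
    have hmod : 2 ^ (p - 1) ≡ 1 [MOD p] := by
      rw [← ZMod.natCast_eq_natCast_iff]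
      push_cast
      rw [← hprim, pow_orderOf_eq_one]
    simpa using pow_eq_pow_of_modEq hmod hz
  refine isBigO_thueMorseSum_of_norm_prod_le (Nat.sub_ne_zero_of_lt hp.one_lt) period
    (by exact_mod_cast hp.one_lt) ?_
  classical
  rw [prod_one_sub_pow_two_pow_eq_ite hp hprim hz]
  split_ifs
  · simp
  · simpa using Nat.norm_cast_le (α := K) p

lemma sum_filter_mod_eq_eq_sum_addChar {m a : ℕ} [NeZero m] (ha : a < m) (u : Finset ℕ)
    (f : ℕ → ℂ) :
    ∑ n ∈ u with n % m = a, f n =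
      (m : ℂ)⁻¹ * ∑ ψ : AddChar (ZMod m) ℂ, ψ (-a) * ∑ n ∈ u, f n * ψ 1 ^ n := by
  have orthogonality (n : ℕ) :
      ∑ ψ : AddChar (ZMod m) ℂ, ψ (-a) * ψ 1 ^ n = if n % m = a then (m : ℂ) else 0 := by
    have hψ (ψ : AddChar (ZMod m) ℂ) : ψ (-a) * ψ 1 ^ n = ψ (n - a) := by
      rw [← AddChar.map_nsmul_eq_pow, ← AddChar.map_add_eq_mul, nsmul_one, neg_add_eq_sub]
    have hmod : (n : ZMod m) - a = 0 ↔ n % m = a := by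
      rw [sub_eq_zero, ZMod.natCast_eq_natCast_iff', Nat.mod_eq_of_lt ha]
    simp_rw [hψ, AddChar.sum_apply_eq_ite, hmod, ZMod.card]
  calc ∑ n ∈ u with n % m = a, f n
      = (m : ℂ)⁻¹ * ∑ n ∈ u, f n * if n % m = a then (m : ℂ) else 0 := by
        have := NeZero.ne (m : ℂ)
        simp_rw [sum_filter, mul_sum, mul_ite, mul_zero]
        refine sum_congr rfl fun n _ => ?_
        field_simp
    _ = (m : ℂ)⁻¹ * ∑ ψ : AddChar (ZMod m) ℂ, ψ (-a) * ∑ n ∈ u, f n * ψ 1 ^ n := by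
        simp_rw [← orthogonality, mul_sum]
        rw [sum_comm]
        simp_rw [mul_left_comm]

lemma isBigO_sum_neg_one_pow_of_thueMorseSum {m a : ℕ} (ha : a < m) {g : ℕ → ℝ}
    (hg : ∀ z : ℂ, z ^ m = 1 → thueMorseSum z =O[atTop] g) :
    (fun x => ∑ n ∈ range x with n % m = a, (-1 : ℝ) ^ s n) =O[atTop] g := by
  have : NeZero m := ⟨by lia⟩
  have expand (x : ℕ) : ((∑ n ∈ range x with n % m = a, (-1 : ℝ) ^ s n : ℝ) : ℂ) =
      (m : ℂ)⁻¹ * ∑ ψ : AddChar (ZMod m) ℂ, ψ (-a) * thueMorseSum (ψ 1) x := by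
    push_cast
    exact sum_filter_mod_eq_eq_sum_addChar ha (range x) _
  rw [← Complex.isBigO_ofReal_left]
  simp_rw [expand]
  refine .const_mul_left (.fun_sum fun ψ _ => .const_mul_left (hg _ ?_) _) _
  rw [← AddChar.map_nsmul_eq_pow, nsmul_one, ZMod.natCast_self, AddChar.map_zero_eq_one]

lemma abs_card_filter_mod_eq_sub_div_le_one {m a : ℕ} (ha : a < m) (x : ℕ) :
    |(#{n ∈ range x | n % m = a} : ℝ) - x / m| ≤ 1 := by
  have hm : 0 < m := by lia
  have hcard : #{n ∈ range x | n % m = a} = x / m + if a < x % m then 1 else 0 := by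
    have hcount := Nat.count_modEq_card x hm a
    simpa only [Nat.count_eq_card_filter_range, Nat.ModEq, Nat.mod_eq_of_lt ha] using hcount
  have hfloor_le : ((x / m : ℕ) : ℝ) ≤ x / m := Nat.cast_div_le
  have hlt_floor : (x : ℝ) / m < (x / m : ℕ) + 1 := by
    rw [← Nat.floor_div_eq_div (K := ℝ)]
    exact Nat.lt_floor_add_one _
  rw [hcard, abs_le]
  split_ifs <;> push_cast <;> constructor <;> linarith

lemma T_eq_card_add_sum_neg_one_pow {m a j : ℕ} (hj : j < 2) (x : ℕ) :
    (T m a j x : ℝ) = (#{n ∈ range x | n % m = a}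
      + (-1) ^ j * ∑ n ∈ range x with n % m = a, (-1 : ℝ) ^ s n) / 2 := by
  have indicator (n : ℕ) :
      (if s n % 2 = j then 1 else 0 : ℝ) = (1 + (-1) ^ j * (-1) ^ s n) / 2 := by
    rw [← pow_add, neg_one_pow_eq_ite]
    grind
  rw [T, ← filter_filter, natCast_card_filter, sum_congr rfl fun n _ => indicator n, ← sum_div,
    sum_add_distrib, ← mul_sum, sum_const, nsmul_one]

theorem isBigO_T_sub_div_of_thueMorseSum {m a j : ℕ} (ha : a < m) (hj : j < 2) {g : ℕ → ℝ}
    (hg_one : (fun _ => 1 : ℕ → ℝ) =O[atTop] g)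
    (hg : ∀ z : ℂ, z ^ m = 1 → thueMorseSum z =O[atTop] g) :
    (fun x : ℕ => (T m a j x : ℝ) - x / (2 * m)) =O[atTop] g := by
  have card_isBigO : (fun x : ℕ => (#{n ∈ range x | n % m = a} : ℝ) - x / m) =O[atTop] g :=
    .trans (.of_bound' <| .of_forall fun x => by
      simpa using abs_card_filter_mod_eq_sub_div_le_one ha x) hg_one
  have sum_isBigO := isBigO_sum_neg_one_pow_of_thueMorseSum ha hg
  refine ((card_isBigO.add (sum_isBigO.const_mul_left ((-1) ^ j))).const_mul_left 2⁻¹).congr_left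
    fun x => ?_
  rw [T_eq_card_add_sum_neg_one_pow hj]
  ring

theorem gelfond_exponent_primitive_root_upper_general
    (p : ℕ) (hp : p.Prime) (hprim : orderOf (2 : ZMod p) = p - 1)
    (a : ℕ) (ha : a < p) (j : ℕ) (hj : j < 2) :
    (fun x : ℕ => (T p a j x : ℝ) - x / (2 * p))
      =O[atTop] fun x : ℕ => (x : ℝ) ^ (Real.log p / ((p - 1) * Real.log 2)) := by
  have exponent_eq : Real.log p / ((p - 1) * Real.log 2) = Real.logb (2 ^ (p - 1)) p := by
    rw [Real.logb, Real.log_pow, Nat.cast_pred hp.pos]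
  have exponent_nonneg : 0 ≤ Real.logb (2 ^ (p - 1)) p :=
    Real.logb_nonneg (one_lt_pow₀ one_lt_two (Nat.sub_ne_zero_of_lt hp.one_lt))
      (by exact_mod_cast hp.one_le)
  rw [exponent_eq]
  exact isBigO_T_sub_div_of_thueMorseSum ha hj
    (by simpa using isBigO_natCast_rpow_rpow_of_le exponent_nonneg)
    fun z hz => isBigO_thueMorseSum_of_pow_prime_eq_one hp hprim hz

/-- Upper-bound half of Theorem 2: if `p` is an odd prime for which `2` is a primitive
root, then `T_{p,a}^{(j)}(x) = x/(2p) + O(x^{α+ε})` for every `ε > 0`, where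
`α = ln p / ((p-1) ln 2)`. -/
theorem gelfond_exponent_primitive_root_upper
    (p : ℕ) (hp : p.Prime) (hodd : Odd p)
    (hprim : orderOf (2 : ZMod p) = p - 1)
    (a : ℕ) (ha : a < p) (j : ℕ) (hj : j < 2)
    (ε : ℝ) (hε : 0 < ε) :
    (fun x : ℕ => (T p a j x : ℝ) - x / (2 * p))
      =O[Filter.atTop] fun x : ℕ =>
        (x : ℝ) ^ (Real.log p / ((p - 1) * Real.log 2) + ε) :=
  (gelfond_exponent_primitive_root_upper_general p hp hprim a ha j hj).trans
    (isBigO_natCast_rpow_rpow_of_le (by linarith))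
end
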